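/- (Proposition III.1(ii)) Assume: Γ ℓ k ≥ 0 for all ℓ, k; for every ℓ and every k, Γ ℓ k ≤ Γ ℓ ℓ (i.e., argmax_k Γ(w_ℓ | w_k) = ℓ); the quantizer fixes the level values, i.e. Q (w ℓ) = ℓ for every ℓ : Fin M; the matrix Pᵀ * P is invertible; and the dequantized observation vector y : Fin T → ℝ defined by y t := w (ω̃ t) satisfies y - σ²·𝟙 ∈ range of P.mulVec (there exists h : Fin K → ℝ with P.mulVec h = y - σ²·𝟙, where 𝟙 is the all-ones vector). Then the least-squares power-domain estimate g_LSPD := (Pᵀ * P)⁻¹.mulVec (Pᵀ.mulVec (y - σ²·𝟙)) maximizes the likelihood: for every g : Fin K → ℝ, ∏_{t} Γ (ω̃ t) (Q ((P.mulVec g) t + σ²)) ≤ ∏_{t} Γ (ω̃ t) (Q ((P.mulVec g_LSPD) t + σ²)). -/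

import Mathlib

open Matrix

section LeastSquares

variable {ι κ R : Type*} [Fintype ι] [Fintype κ] [DecidableEq κ] [CommRing R]

/-- The least-squares solution of `P *ᵥ x = b` given by the normal equations. It is meaningful only
when `Pᵀ * P` is invertible: otherwise the matrix inverse, and hence the solution, is `0`. -/
noncomputable def leastSquares (P : Matrix ι κ R) (b : ι → R) : κ → R :=
  (Pᵀ * P)⁻¹ *ᵥ (Pᵀ *ᵥ b)

theorem leastSquares_mulVec {P : Matrix ι κ R} (hP : IsUnit (Pᵀ * P).det) (x : κ → R) :
    leastSquares P (P *ᵥ x) = x := by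
  rw [leastSquares, mulVec_mulVec, mulVec_mulVec, Matrix.mul_assoc, nonsing_inv_mul _ hP,
    one_mulVec]

theorem mulVec_leastSquares {P : Matrix ι κ R} (hP : IsUnit (Pᵀ * P).det) {b : ι → R}
    (hb : b ∈ Set.range P.mulVec) : P *ᵥ leastSquares P b = b := by
  obtain ⟨x, rfl⟩ := hb
  rw [leastSquares_mulVec hP]

end LeastSquares

section Likelihood

variable {ι A L S : Type*} [Fintype ι] [CommSemiring S]

/-- The likelihood of the received powers `p`, one per time slot, given the decoded levels `ω`:
each power is quantized by `Q` and sent over the memoryless channel `Γ`, where `Γ ℓ k` is the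
probability of decoding `ℓ` when `k` was sent. -/
def feedbackLikelihood (Γ : L → L → S) (Q : A → L) (ω : ι → L) (p : ι → A) : S :=
  ∏ t, Γ (ω t) (Q (p t))

theorem feedbackLikelihood_le_of_quantizer_eq [PartialOrder S] [IsOrderedRing S]
    {Γ : L → L → S} (hΓnonneg : ∀ ℓ k, 0 ≤ Γ ℓ k) (hΓdiag : ∀ ℓ k, Γ ℓ k ≤ Γ ℓ ℓ)
    {Q : A → L} {ω : ι → L} {y : ι → A} (hy : ∀ t, Q (y t) = ω t) (p : ι → A) :
    feedbackLikelihood Γ Q ω p ≤ feedbackLikelihood Γ Q ω y := by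
  refine Finset.prod_le_prod (fun t _ ↦ hΓnonneg _ _) fun t _ ↦ ?_
  rw [hy]
  exact hΓdiag _ _

end Likelihood

theorem lspd_maximizes_likelihood_general {ι κ R L S : Type*} [Fintype ι] [Fintype κ]
    [DecidableEq κ] [CommRing R] [CommSemiring S] [PartialOrder S] [IsOrderedRing S]
    {Γ : L → L → S} (hΓnonneg : ∀ ℓ k, 0 ≤ Γ ℓ k) (hΓdiag : ∀ ℓ k, Γ ℓ k ≤ Γ ℓ ℓ)
    {Q : R → L} {ω : ι → L} {y : ι → R} (hy : ∀ t, Q (y t) = ω t)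
    {P : Matrix ι κ R} (hP : IsUnit (Pᵀ * P).det) {noise : ι → R}
    (hrange : y - noise ∈ Set.range P.mulVec) (g : κ → R) :
    feedbackLikelihood Γ Q ω (P *ᵥ g + noise) ≤
      feedbackLikelihood Γ Q ω (P *ᵥ leastSquares P (y - noise) + noise) := by
  rw [mulVec_leastSquares hP hrange, sub_add_cancel]
  exact feedbackLikelihood_le_of_quantizer_eq hΓnonneg hΓdiag hy _

/-- Proposition III.1(ii): under the diagonal-maximum condition on the DMC, the
least-squares power-domain (LSPD) estimate maximizes the likelihood. -/
theorem lspd_maximizes_likelihood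
    (M T K : ℕ) (hM : 0 < M) (hT : 0 < T) (hK : 0 < K)
    (w : Fin M → ℝ) (Γ : Fin M → Fin M → ℝ) (Q : ℝ → Fin M)
    (P : Matrix (Fin T) (Fin K) ℝ) (σ2 : ℝ) (ω' : Fin T → Fin M)
    (hΓnonneg : ∀ ℓ k : Fin M, 0 ≤ Γ ℓ k)
    (hΓdiag : ∀ ℓ k : Fin M, Γ ℓ k ≤ Γ ℓ ℓ)
    (hQw : ∀ ℓ : Fin M, Q (w ℓ) = ℓ)
    (hinv : IsUnit (Pᵀ * P).det)
    (y : Fin T → ℝ) (hy : ∀ t : Fin T, y t = w (ω' t))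
    (hrange : ∃ h : Fin K → ℝ, P.mulVec h = y - fun _ => σ2) :
    ∀ g : Fin K → ℝ,
      ∏ t : Fin T, Γ (ω' t) (Q (P.mulVec g t + σ2))
        ≤ ∏ t : Fin T,
            Γ (ω' t)
              (Q (P.mulVec ((Pᵀ * P)⁻¹.mulVec (Pᵀ.mulVec (y - fun _ => σ2))) t + σ2)) := by
  exact lspd_maximizes_likelihood_general hΓnonneg hΓdiag (fun t ↦ by rw [hy, hQw]) hinv hrange
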